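/- Let f: G → G' be a circuit surjection where G is 2-connected and G' is not a circuit (i.e., the edge set of G' is not itself a single circuit). Then for every edge e of G', any circuit C of G containing at least one element of f⁻¹(e) contains every element of f⁻¹(e). -/

import Mathlib

/-- A *circuit* of a simple graph is the edge set of a cycle. -/
def SimpleGraph.IsCircuit {V : Type*} (G : SimpleGraph V) (C : Set (Sym2 V)) : Prop :=
  ∃ (v : V) (w : G.Walk v v), w.IsCycle ∧ C = {e | e ∈ w.edges}

/-- A graph is 2-connected (in the edge sense) if any two distinct edges lie on a
common circuit. -/
def TwoConnectedE {V : Type*} (G : SimpleGraph V) : Prop :=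
  ∀ e₁ ∈ G.edgeSet, ∀ e₂ ∈ G.edgeSet, e₁ ≠ e₂ →
    ∃ C, G.IsCircuit C ∧ e₁ ∈ C ∧ e₂ ∈ C

/-!
Work in the cycle space, where circuits are the minimal nonempty cycles. If the sum of two circuits
`X` and `Y` is a circuit, and `X`, `Y` and `X ∆ Y` all contain an edge over `g`, then
`f(X) ∆ f(Y)` is a cycle inside `f(X ∆ Y)` that misses `g`, so `f(X) = f(Y)`.

Let `x ∈ T` and `y ∉ T` lie over the same edge. Adding to `T` an ear through `y` gives a theta whose
three circuits all contain an edge over `f x`, hence have the same image `D`. As `D` is a circuit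
and `G'` is not, some edge `z` has `f z ∉ D`. An ear `K` of the theta through `z` can be chosen to
meet it only in the intersection of two of its circuits, `T₁` and `T₂` say. An edge over
`f(K ∩ T₁) ⊆ D` also lies in `T₁ ∆ T₂`, hence in `Tᵢ ∆ K` for `i = 1` or `2`, so `f(K) = f(Tᵢ) = D`,
contradicting `f z ∉ D`.
-/

open scoped symmDiff Finset

/-- A family of finite subsets of `α` closed under symmetric difference, whose members are called
cycles: the cycle space of a (finitary) binary matroid, such as that of a graph. -/
structure BinarySpace (α : Type*) [DecidableEq α] where
  IsCycle : Finset α → Prop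
  isCycle_symmDiff {S T : Finset α} : IsCycle S → IsCycle T → IsCycle (S ∆ T)

namespace BinarySpace

variable {α β : Type*} [DecidableEq α] [DecidableEq β] {B : BinarySpace α} {B' : BinarySpace β}
  {H K L S T T₁ T₂ T₃ X Y : Finset α} {x y z : α} {f : α → β} {g : β}

/-- A circuit of a binary space is a minimal nonempty cycle. -/
def IsCircuit (B : BinarySpace α) (K : Finset α) : Prop :=
  Minimal (fun S ↦ B.IsCycle S ∧ S.Nonempty) K

lemma IsCircuit.isCycle (hK : B.IsCircuit K) : B.IsCycle K := hK.prop.1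

lemma IsCircuit.nonempty (hK : B.IsCircuit K) : K.Nonempty := hK.prop.2

lemma IsCircuit.eq_empty_or_eq_of_subset (hK : B.IsCircuit K) (hS : B.IsCycle S) (hSK : S ⊆ K) :
    S = ∅ ∨ S = K :=
  S.eq_empty_or_nonempty.imp_right fun hne ↦ hSK.antisymm (hK.le_of_le ⟨hS, hne⟩ hSK)

lemma IsCircuit.eq_of_subset (hK : B.IsCircuit K) (hL : B.IsCircuit L) (hLK : L ⊆ K) : L = K :=
  (hK.eq_empty_or_eq_of_subset hL.isCycle hLK).resolve_left hL.nonempty.ne_empty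

lemma exists_isCircuit_subset_of_mem (hS : B.IsCycle S) (hx : x ∈ S) :
    ∃ K ⊆ S, B.IsCircuit K ∧ x ∈ K := by
  obtain ⟨K, hKS, hK⟩ :=
    exists_minimal_le_of_wellFoundedLT (fun K ↦ B.IsCycle K ∧ x ∈ K) S ⟨hS, hx⟩
  refine ⟨K, hKS, ⟨⟨hK.prop.1, x, hK.prop.2⟩, fun D ⟨hD, d, hd⟩ hDK ↦ ?_⟩, hK.prop.2⟩
  by_cases hxD : x ∈ D
  · exact hK.le_of_le ⟨hD, hxD⟩ hDK
  · have hKD : K ⊆ K ∆ D := hK.le_of_le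
      ⟨B.isCycle_symmDiff hK.prop.1 hD, by grind [Finset.mem_symmDiff, hK.prop.2]⟩
      (by grind [Finset.mem_symmDiff])
    have := hKD (hDK hd)
    grind [Finset.mem_symmDiff]

/-- `B.IsEar H K` says that the circuit `K` meets `H` and leaves it, and that no cycle inside
`K ∪ H` uses a proper nonempty part of `K \ H`. For a connected subgraph `H` of a graph, `K \ H` is
then an ear: a path attached to `H` at its two ends. -/
structure IsEar (B : BinarySpace α) (H K : Finset α) : Prop where
  isCircuit : B.IsCircuit K
  inter_nonempty : (K ∩ H).Nonempty
  sdiff_nonempty : (K \ H).Nonempty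
  sdiff_eq {S : Finset α} : B.IsCycle S → S ⊆ K ∪ H → (S \ H).Nonempty → S \ H = K \ H

lemma IsCircuit.exists_isEar (hK : B.IsCircuit K) (hKH : (K ∩ H).Nonempty) (hz : z ∈ K \ H) :
    ∃ L ⊆ K ∪ H, B.IsEar H L ∧ z ∈ L := by
  let IsCandidate (L : Finset α) : Prop :=
    B.IsCircuit L ∧ (L ∩ H).Nonempty ∧ z ∈ L ∧ L ⊆ K ∪ H
  obtain ⟨D, -, ⟨L, hL, hLD⟩, hD⟩ := exists_minimal_le_of_wellFoundedLT
    (fun D ↦ ∃ L, IsCandidate L ∧ L \ H = D) (K \ H)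
    ⟨K, ⟨hK, hKH, by grind, Finset.subset_union_left⟩, rfl⟩
  subst hLD
  obtain ⟨hLcirc, hLH, hzL, hLK⟩ := hL
  have sdiff_subset_of_mem {S : Finset α} (hS : B.IsCycle S) (hSL : S ⊆ L ∪ H) (hzS : z ∈ S) :
      L \ H ⊆ S := by
    obtain ⟨C, hCS, hC, hzC⟩ := exists_isCircuit_subset_of_mem hS hzS
    have hCH : (C ∩ H).Nonempty := by
      by_contra hCH
      rw [Finset.not_nonempty_iff_eq_empty, ← Finset.disjoint_iff_inter_eq_empty] at hCH
      have hCL : C = L := hLcirc.eq_of_subset hC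
        (hCH.left_le_of_le_sup_right (hCS.trans hSL))
      exact hLH.ne_empty (Finset.disjoint_iff_inter_eq_empty.1 (hCL ▸ hCH))
    have hLC : L \ H ⊆ C \ H := hD ⟨C, ⟨hC, hCH, hzC, by grind⟩, rfl⟩ (by grind)
    grind
  refine ⟨L, hLK, ⟨hLcirc, hLH, ⟨z, by grind⟩, fun {S} hS hSL hSH ↦ ?_⟩, hzL⟩
  by_cases hzS : z ∈ S
  · grind [sdiff_subset_of_mem hS hSL hzS]
  · have hsub := sdiff_subset_of_mem (B.isCycle_symmDiff hS hLcirc.isCycle)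
      (by grind [Finset.mem_symmDiff]) (by grind [Finset.mem_symmDiff])
    obtain ⟨s, hs⟩ := hSH
    have hsL : s ∈ S ∆ L := hsub (by grind)
    grind [Finset.mem_symmDiff]

/-- A theta: three circuits `T₁`, `T₂`, `T₃ = T₁ ∆ T₂` that are the only nonempty cycles in their
union. In a graph these are the three circuits formed by three internally disjoint paths with
common ends. -/
structure IsTheta (B : BinarySpace α) (T₁ T₂ T₃ : Finset α) : Prop where
  isCircuit₁ : B.IsCircuit T₁
  isCircuit₂ : B.IsCircuit T₂
  isCircuit₃ : B.IsCircuit T₃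
  symmDiff_eq : T₁ ∆ T₂ = T₃
  eq_of_subset {S : Finset α} :
    B.IsCycle S → S ⊆ T₁ ∪ T₂ → S = ∅ ∨ S = T₁ ∨ S = T₂ ∨ S = T₃

lemma IsTheta.union_eq (hT : B.IsTheta T₁ T₂ T₃) : T₂ ∪ T₃ = T₁ ∪ T₂ := by
  rw [← hT.symmDiff_eq]
  grind [Finset.mem_symmDiff]

lemma IsTheta.rotate (hT : B.IsTheta T₁ T₂ T₃) : B.IsTheta T₂ T₃ T₁ where
  isCircuit₁ := hT.isCircuit₂
  isCircuit₂ := hT.isCircuit₃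
  isCircuit₃ := hT.isCircuit₁
  symmDiff_eq := by rw [← hT.symmDiff_eq, symmDiff_comm T₁, symmDiff_symmDiff_cancel_left]
  eq_of_subset hS hST := by
    have := hT.eq_of_subset hS (hT.union_eq ▸ hST)
    tauto

lemma IsEar.eq_of_subset (hK : B.IsEar T K) (hT : B.IsCircuit T) (hS : B.IsCycle S)
    (hSK : S ⊆ T ∪ K) : S = ∅ ∨ S = T ∨ S = K ∨ S = T ∆ K := by
  rcases (S \ T).eq_empty_or_nonempty with hST | hST
  · have := hT.eq_empty_or_eq_of_subset hS (Finset.sdiff_eq_empty_iff_subset.1 hST)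
    tauto
  · have hST := hK.sdiff_eq hS (Finset.union_comm T K ▸ hSK) hST
    have hsub : S ∆ K ⊆ T := fun a ha ↦ by
      have := Finset.ext_iff.1 hST a
      grind [Finset.mem_symmDiff]
    rcases hT.eq_empty_or_eq_of_subset (B.isCycle_symmDiff hS hK.isCircuit.isCycle) hsub with h | h
    · exact .inr (.inr (.inl (Finset.symmDiff_eq_empty.1 h)))
    · exact .inr (.inr (.inr (by rw [← h, symmDiff_symmDiff_cancel_right])))

lemma IsEar.not_subset (hK : B.IsEar T K) (hT : B.IsCircuit T) : ¬ T ⊆ K := fun hTK ↦ by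
  obtain ⟨z, hz⟩ := hK.sdiff_nonempty
  grind [hK.isCircuit.eq_of_subset hT hTK]

lemma IsEar.isCircuit_symmDiff (hK : B.IsEar T K) (hT : B.IsCircuit T) :
    B.IsCircuit (T ∆ K) := by
  obtain ⟨z, hz⟩ := hK.sdiff_nonempty
  obtain ⟨a, ha⟩ := hK.inter_nonempty
  refine ⟨⟨B.isCycle_symmDiff hT.isCycle hK.isCircuit.isCycle, z, by
    grind [Finset.mem_symmDiff]⟩, fun S ⟨hS, hSne⟩ hSTK ↦ ?_⟩
  have ha' : a ∉ S := fun h ↦ by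
    have := hSTK h
    grind [Finset.mem_symmDiff]
  rcases hK.eq_of_subset hT hS (hSTK.trans Finset.symmDiff_subset_union) with rfl | rfl | rfl | rfl
  · exact (Finset.not_nonempty_empty hSne).elim
  · grind
  · grind
  · rfl

lemma IsEar.isTheta (hK : B.IsEar T K) (hT : B.IsCircuit T) : B.IsTheta T K (T ∆ K) :=
  ⟨hT, hK.isCircuit, hK.isCircuit_symmDiff hT, rfl, hK.eq_of_subset hT⟩

lemma IsEar.symmDiff (hK : B.IsEar T K) (hT : B.IsCircuit T) : B.IsEar T (T ∆ K) where
  isCircuit := hK.isCircuit_symmDiff hT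
  inter_nonempty := by
    obtain ⟨t, ht, htK⟩ := Finset.not_subset.1 (hK.not_subset hT)
    exact ⟨t, by grind [Finset.mem_symmDiff]⟩
  sdiff_nonempty := by rw [symmDiff_sdiff_left]; exact hK.sdiff_nonempty
  sdiff_eq hS hSK hST := by
    rw [symmDiff_sdiff_left]
    exact hK.sdiff_eq hS (by grind [Finset.mem_symmDiff]) hST

section CircuitMap

variable (hf : ∀ K, B.IsCircuit K → B'.IsCircuit (K.image f))
include hf

lemma image_eq_of_mem_image_symmDiff (hX : B.IsCircuit X) (hY : B.IsCircuit Y)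
    (hXY : B.IsCircuit (X ∆ Y)) (hgX : g ∈ X.image f) (hgY : g ∈ Y.image f)
    (hgXY : g ∈ (X ∆ Y).image f) : X.image f = Y.image f := by
  have hsub : X.image f ∆ Y.image f ⊆ (X ∆ Y).image f := by
    grind [Finset.mem_symmDiff]
  have hcyc := B'.isCycle_symmDiff (hf X hX).isCycle (hf Y hY).isCycle
  rcases (hf _ hXY).eq_empty_or_eq_of_subset hcyc hsub with h | h
  · exact Finset.symmDiff_eq_empty.1 h
  · rw [← h] at hgXY
    grind [Finset.mem_symmDiff]

lemma IsEar.notMem_image_symmDiff (hK : B.IsEar T K) (hT : B.IsCircuit T) (hzK : z ∈ K)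
    (hz : f z ∉ T.image f) (hgT : g ∈ T.image f) (hgK : g ∈ K.image f) :
    g ∉ (T ∆ K).image f := fun hg ↦
  hz <| image_eq_of_mem_image_symmDiff hf hT hK.isCircuit (hK.isCircuit_symmDiff hT) hgT hgK hg ▸
    Finset.mem_image_of_mem f hzK

lemma IsEar.exists_isEar_inter_subset (hL : B.IsEar H L) (hT : B.IsCircuit T) (hTH : T ⊆ H)
    (hH : H.image f ⊆ T.image f) (hLT : (L ∩ T).Nonempty) (hzL : z ∈ L)
    (hz : f z ∉ T.image f) : ∃ K, B.IsEar T K ∧ z ∈ K ∧ K ∩ H ⊆ T ∧ K \ H = L \ H := by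
  have hzH : z ∉ H := fun h ↦ hz (hH (Finset.mem_image_of_mem f h))
  obtain ⟨K, hKL, hK, hzK⟩ := hL.isCircuit.exists_isEar hLT (z := z) (by grind)
  refine ⟨K, hK, hzK, fun p hp ↦ ?_, hL.sdiff_eq hK.isCircuit.isCycle (by grind) ⟨z, by grind⟩⟩
  by_contra hpT
  exact hK.notMem_image_symmDiff hf hT hzK hz (hH (Finset.mem_image_of_mem f (by grind)))
    (Finset.mem_image_of_mem f (a := p) (by grind))
    (Finset.mem_image_of_mem f (a := p) (by grind [Finset.mem_symmDiff]))

/- The ears `K₁` of `T₁` and `K₂` of `T₂` cut from `L` agree outside the theta, so `K₁ ∆ K₂` is one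
of its four cycles; replacing `Kᵢ` by `Tᵢ ∆ Kᵢ` as needed makes them equal. -/
lemma IsTheta.exists_isEar_isEar (hT : B.IsTheta T₁ T₂ T₃)
    (h₁₂ : T₁.image f = T₂.image f) (hL : B.IsEar (T₁ ∪ T₂) L)
    (hL₁ : (L ∩ T₁).Nonempty) (hL₂ : (L ∩ T₂).Nonempty) (hzL : z ∈ L) (hz : f z ∉ T₁.image f) :
    ∃ K, B.IsEar T₁ K ∧ B.IsEar T₂ K ∧ z ∈ K ∧ K ∩ (T₁ ∪ T₂) ⊆ T₁ ∩ T₂ := by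
  have hz₂ : z ∉ T₂ := fun h ↦ hz (h₁₂ ▸ Finset.mem_image_of_mem f h)
  obtain ⟨K₁, hK₁, hzK₁, hK₁T, hK₁L⟩ := hL.exists_isEar_inter_subset hf hT.isCircuit₁
    Finset.subset_union_left (by grind) hL₁ hzL hz
  obtain ⟨K₂, hK₂, hzK₂, hK₂T, hK₂L⟩ := hL.exists_isEar_inter_subset hf hT.isCircuit₂
    Finset.subset_union_right (by grind) hL₂ hzL (h₁₂ ▸ hz)
  have hsub : K₁ ∆ K₂ ⊆ T₁ ∪ T₂ := fun a ha ↦ by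
    have := Finset.ext_iff.1 (hK₁L.trans hK₂L.symm) a
    grind [Finset.mem_symmDiff]
  have hcyc := B.isCycle_symmDiff hK₁.isCircuit.isCycle hK₂.isCircuit.isCycle
  rcases hT.eq_of_subset hcyc hsub with h | h | h | h
  · obtain rfl : K₁ = K₂ := Finset.symmDiff_eq_empty.1 h
    exact ⟨K₁, hK₁, hK₂, hzK₁, by grind⟩
  · obtain rfl : T₁ ∆ K₁ = K₂ := by rw [← h, symmDiff_symmDiff_self']
    exact ⟨_, hK₁.symmDiff hT.isCircuit₁, hK₂, hzK₂, by grind [Finset.mem_symmDiff]⟩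
  · obtain rfl : T₂ ∆ K₂ = K₁ := by rw [← h, symmDiff_symmDiff_cancel_right]
    exact ⟨_, hK₁, hK₂.symmDiff hT.isCircuit₂, hzK₁, by grind [Finset.mem_symmDiff]⟩
  · have heq : T₁ ∆ K₁ = T₂ ∆ K₂ := by
      rw [← hT.symmDiff_eq] at h
      rw [← symmDiff_eq_bot, symmDiff_symmDiff_symmDiff_comm, h, symmDiff_self]
    refine ⟨T₁ ∆ K₁, hK₁.symmDiff hT.isCircuit₁, heq ▸ hK₂.symmDiff hT.isCircuit₂, ?_, ?_⟩
    · grind [Finset.mem_symmDiff]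
    · have := Finset.ext_iff.1 heq
      grind [Finset.mem_symmDiff]

lemma IsTheta.mem_image_of_isEar (hT : B.IsTheta T₁ T₂ T₃)
    (h₁₂ : T₁.image f = T₂.image f) (h₁₃ : T₁.image f = T₃.image f)
    (hL : B.IsEar (T₁ ∪ T₂) L) (hL₁ : (L ∩ T₁).Nonempty) (hL₂ : (L ∩ T₂).Nonempty)
    (hzL : z ∈ L) : f z ∈ T₁.image f := by
  by_contra hz
  obtain ⟨K, hK₁, hK₂, hzK, hKT⟩ := hT.exists_isEar_isEar hf h₁₂ hL hL₁ hL₂ hzL hz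
  obtain ⟨a, ha⟩ := hK₁.inter_nonempty
  have haK : f a ∈ K.image f := Finset.mem_image_of_mem f (by grind)
  have haT : f a ∈ T₁.image f := Finset.mem_image_of_mem f (by grind)
  obtain ⟨b, hb₃, hba⟩ := Finset.mem_image.1 (h₁₃ ▸ haT)
  rw [← hT.symmDiff_eq, Finset.mem_symmDiff] at hb₃
  have hbK : b ∉ K := fun h ↦ by
    have := hKT (Finset.mem_inter.2 ⟨h, by grind⟩)
    grind
  rcases hb₃ with hb | hb
  · exact hK₁.notMem_image_symmDiff hf hT.isCircuit₁ hzK hz haT haK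
      (Finset.mem_image.2 ⟨b, by grind [Finset.mem_symmDiff], hba⟩)
  · exact hK₂.notMem_image_symmDiff hf hT.isCircuit₂ hzK (h₁₂ ▸ hz) (h₁₂ ▸ haT) haK
      (Finset.mem_image.2 ⟨b, by grind [Finset.mem_symmDiff], hba⟩)

lemma IsTheta.mem_image_of_inter_nonempty (hT : B.IsTheta T₁ T₂ T₃)
    (h₁₂ : T₁.image f = T₂.image f) (h₁₃ : T₁.image f = T₃.image f)
    (hK : B.IsCircuit K) (hKT : (K ∩ (T₁ ∪ T₂)).Nonempty) (hzK : z ∈ K) :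
    f z ∈ T₁.image f := by
  by_cases hzT : z ∈ T₁ ∪ T₂
  · simpa only [Finset.image_union, ← h₁₂, Finset.union_self] using Finset.mem_image_of_mem f hzT
  obtain ⟨L, -, hL, hzL⟩ := hK.exists_isEar hKT (Finset.mem_sdiff.2 ⟨hzK, hzT⟩)
  obtain ⟨a, ha⟩ := hL.inter_nonempty
  have haL : a ∈ L := by grind
  by_cases ha₁ : a ∈ T₁
  · by_cases ha₂ : a ∈ T₂
    · exact hT.mem_image_of_isEar hf h₁₂ h₁₃ hL ⟨a, by grind⟩ ⟨a, by grind⟩ hzL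
    · have ha₃ : a ∈ T₃ := hT.symmDiff_eq ▸ Finset.mem_symmDiff.2 (.inl ⟨ha₁, ha₂⟩)
      rw [← hT.union_eq, ← hT.rotate.union_eq] at hL
      exact h₁₃ ▸ hT.rotate.rotate.mem_image_of_isEar hf h₁₃.symm (h₁₃.symm.trans h₁₂) hL
        ⟨a, by grind⟩ ⟨a, by grind⟩ hzL
  · have ha₂ : a ∈ T₂ := by grind
    have ha₃ : a ∈ T₃ := hT.symmDiff_eq ▸ Finset.mem_symmDiff.2 (.inr ⟨ha₂, ha₁⟩)
    rw [← hT.union_eq] at hL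
    exact h₁₂ ▸ hT.rotate.mem_image_of_isEar hf (h₁₂.symm.trans h₁₃) h₁₂.symm hL
      ⟨a, by grind⟩ ⟨a, by grind⟩ hzL

theorem IsCircuit.mem_of_apply_eq (hT : B.IsCircuit T) (hx : x ∈ T)
    (hK : B.IsCircuit K) (hxK : x ∈ K) (hyK : y ∈ K)
    (hL : B.IsCircuit L) (hxL : x ∈ L) (hzL : z ∈ L)
    (hxy : f y = f x) (hz : f z ∉ T.image f) : y ∈ T := by
  by_contra hy
  obtain ⟨M, -, hM, hyM⟩ := hK.exists_isEar (H := T) (z := y) ⟨x, by grind⟩ (by grind)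
  have hTM := hM.isTheta hT
  have hxT : f x ∈ T.image f := Finset.mem_image_of_mem f hx
  have hxM : f x ∈ M.image f := hxy ▸ Finset.mem_image_of_mem f hyM
  have hxTM : f x ∈ (T ∆ M).image f :=
    hxy ▸ Finset.mem_image_of_mem f (Finset.mem_symmDiff.2 (.inr ⟨hyM, hy⟩))
  have h₁₂ := image_eq_of_mem_image_symmDiff hf hT hM.isCircuit hTM.isCircuit₃ hxT hxM hxTM
  have h₁₃ := image_eq_of_mem_image_symmDiff hf hT hTM.isCircuit₃
    (by rw [symmDiff_symmDiff_cancel_left]; exact hM.isCircuit) hxT hxTM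
    (by rw [symmDiff_symmDiff_cancel_left]; exact hxM)
  exact hz (hTM.mem_image_of_inter_nonempty hf h₁₂ h₁₃ hL ⟨x, by grind⟩ hzL)

end CircuitMap

end BinarySpace

section Graph

variable {V : Type*} {G : SimpleGraph V}

lemma exists_existsUnique_adj_of_isAcyclic [Finite G.edgeSet] (hG : G.IsAcyclic) {a b : V}
    (hab : G.Adj a b) : ∃ u, ∃! v, G.Adj u v := by
  have : Nonempty V := ⟨a⟩
  obtain ⟨u, v, p, hp, hmax⟩ := SimpleGraph.Walk.exists_isPath_forall_isPath_length_le_length G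
  have hlen : 1 ≤ p.length := hmax a b hab.toWalk (SimpleGraph.Walk.IsPath.of_adj hab)
  refine ⟨u, p.snd, p.adj_snd (by grind), fun w hw ↦ hG.eq_snd_of_adj_start hp hw ?_⟩
  by_contra hwp
  have := hmax _ _ _ (hp.cons (h := hw.symm) hwp)
  grind [SimpleGraph.Walk.length_cons]

variable [DecidableEq V] {C : Set (Sym2 V)} {K S : Finset (Sym2 V)}

/-- The binary cycle space of a graph: the finite edge sets that have an even number of edges at
every vertex. -/
def cycleSpace (G : SimpleGraph V) : BinarySpace (Sym2 V) where
  IsCycle S := (S : Set (Sym2 V)) ⊆ G.edgeSet ∧ ∀ v, Even #{e ∈ S | v ∈ e}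
  isCycle_symmDiff {S T} hS hT := by
    refine ⟨fun e he ↦ ?_, fun v ↦ ?_⟩
    · exact (Finset.mem_symmDiff.1 he).elim (fun h ↦ hS.1 h.1) (fun h ↦ hT.1 h.1)
    · have hfilter : {e ∈ S ∆ T | v ∈ e} = {e ∈ S | v ∈ e} ∆ {e ∈ T | v ∈ e} := by
        grind [Finset.mem_symmDiff]
      have h₁ := Finset.card_sdiff_add_card_inter {e ∈ S | v ∈ e} {e ∈ T | v ∈ e}
      have h₂ := Finset.card_sdiff_add_card_inter {e ∈ T | v ∈ e} {e ∈ S | v ∈ e}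
      rw [Finset.inter_comm] at h₂
      have := hS.2 v
      have := hT.2 v
      rw [hfilter, symmDiff_def, Finset.sup_eq_union,
        Finset.card_union_of_disjoint disjoint_sdiff_sdiff]
      grind

lemma isCycle_cycleSpace_toFinset_edges {u : V} {w : G.Walk u u} (hw : w.IsTrail) :
    (cycleSpace G).IsCycle w.edges.toFinset := by
  refine ⟨fun e he ↦ w.edges_subset_edgeSet (by simpa using he), fun v ↦ ?_⟩
  have hcount : #{e ∈ w.edges.toFinset | v ∈ e} = w.edges.countP (v ∈ ·) := by
    rw [List.countP_eq_length_filter, ← List.toFinset_card_of_nodup (hw.edges_nodup.filter _),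
      List.toFinset_filter]
    simp only [decide_eq_true_eq]
  rw [hcount, hw.even_countP_edges_iff]
  exact fun h ↦ (h rfl).elim

lemma eq_empty_of_isCycle_of_subset_edges_of_isPath (hS : (cycleSpace G).IsCycle S) {u v : V}
    {p : G.Walk u v} (hp : p.IsPath) (hSp : S ⊆ p.edges.toFinset) : S = ∅ := by
  induction p with
  | nil => simpa using hSp
  | @cons a b c hab q ih =>
    rw [SimpleGraph.Walk.cons_isPath_iff] at hp
    have hSq : ∀ e ∈ S, e = s(a, b) ∨ e ∈ q.edges := fun e he ↦ by simpa using hSp he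
    refine ih hp.1 fun e he ↦ List.mem_toFinset.2 ((hSq e he).resolve_left ?_)
    rintro rfl
    have hfilter : {e ∈ S | a ∈ e} = {s(a, b)} := by
      ext e
      refine ⟨fun h ↦ ?_, by simp_all⟩
      obtain ⟨heS, hae⟩ := Finset.mem_filter.1 h
      exact Finset.mem_singleton.2 ((hSq e heS).resolve_right fun heq ↦
        hp.2 (SimpleGraph.Walk.mem_support_of_mem_edges heq hae))
    have := hS.2 a
    simp [hfilter] at this

lemma exists_subset_isCircuit_coe (hS : (cycleSpace G).IsCycle S) (hne : S.Nonempty) :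
    ∃ K ⊆ S, G.IsCircuit (K : Set (Sym2 V)) := by
  let H := SimpleGraph.fromEdgeSet (S : Set (Sym2 V))
  have hH : H.edgeSet = S := by
    rw [SimpleGraph.edgeSet_fromEdgeSet, sdiff_eq_left, Set.disjoint_left]
    exact fun e he ↦ G.not_isDiag_of_mem_edgeSet (hS.1 he)
  have hHadj (a b : V) : H.Adj a b ↔ s(a, b) ∈ S := by
    rw [← SimpleGraph.mem_edgeSet, hH, Finset.mem_coe]
  have hHG : H ≤ G := fun a b hab ↦ hS.1 ((hHadj a b).1 hab)
  have hcycle : ¬ H.IsAcyclic := fun hacyclic ↦ by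
    obtain ⟨⟨a, b⟩, hab⟩ := hne
    have : Finite H.edgeSet := hH ▸ S.finite_toSet
    obtain ⟨u, v, huv, huniq⟩ :=
      exists_existsUnique_adj_of_isAcyclic hacyclic ((hHadj a b).2 hab)
    have hfilter : {e ∈ S | u ∈ e} = {s(u, v)} := by
      refine Finset.eq_singleton_iff_unique_mem.2 ⟨?_, fun e he ↦ ?_⟩
      · exact Finset.mem_filter.2 ⟨(hHadj u v).1 huv, Sym2.mem_mk_left u v⟩
      · obtain ⟨heS, w, rfl⟩ := Finset.mem_filter.1 he
        rw [huniq w ((hHadj u w).2 heS)]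
    have := hS.2 u
    simp [hfilter] at this
  simp only [SimpleGraph.IsAcyclic, not_forall, not_not] at hcycle
  obtain ⟨v, w, hw⟩ := hcycle
  refine ⟨w.edges.toFinset, fun e he ↦ ?_, v, w.mapLe hHG, hw.mapLe hHG, by simp⟩
  exact Finset.mem_coe.1 (hH ▸ w.edges_subset_edgeSet (List.mem_toFinset.1 he))

lemma isCircuit_cycleSpace_of_isCircuit_coe (hK : G.IsCircuit (K : Set (Sym2 V))) :
    (cycleSpace G).IsCircuit K := by
  obtain ⟨v, w, hw, hKw⟩ := hK
  obtain rfl : K = w.edges.toFinset := by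
    ext e; rw [← Finset.mem_coe, hKw]; simp
  have hcyc : (cycleSpace G).IsCycle w.edges.toFinset :=
    isCycle_cycleSpace_toFinset_edges hw.isTrail
  cases w with
  | nil => exact (hw.ne_nil rfl).elim
  | @cons _ b _ hvb q =>
    rw [SimpleGraph.Walk.cons_isCycle_iff] at hw
    have eq_empty_of_notMem {R : Finset (Sym2 V)} (hR : (cycleSpace G).IsCycle R)
        (hRw : R ⊆ (SimpleGraph.Walk.cons hvb q).edges.toFinset) (hvR : s(v, b) ∉ R) : R = ∅ :=
      eq_empty_of_isCycle_of_subset_edges_of_isPath hR hw.1 fun e he ↦ by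
        have := hRw he
        rw [List.mem_toFinset, SimpleGraph.Walk.edges_cons, List.mem_cons] at this
        exact List.mem_toFinset.2 (this.resolve_left (ne_of_mem_of_not_mem he hvR))
    have hvw : s(v, b) ∈ (SimpleGraph.Walk.cons hvb q).edges.toFinset := by simp
    refine ⟨⟨hcyc, _, hvw⟩, fun S ⟨hS, hSne⟩ hSw ↦ ?_⟩
    have hvS : s(v, b) ∈ S := by
      by_contra hvS
      exact hSne.ne_empty (eq_empty_of_notMem hS hSw hvS)
    refine (Finset.symmDiff_eq_empty.1 (eq_empty_of_notMem
      ((cycleSpace G).isCycle_symmDiff hS hcyc) ?_ ?_)).ge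
    · grind [Finset.mem_symmDiff]
    · grind [Finset.mem_symmDiff]

lemma isCircuit_cycleSpace_iff :
    (cycleSpace G).IsCircuit K ↔ G.IsCircuit (K : Set (Sym2 V)) := by
  refine ⟨fun hK ↦ ?_, isCircuit_cycleSpace_of_isCircuit_coe⟩
  obtain ⟨L, hLK, hL⟩ := exists_subset_isCircuit_coe hK.isCycle hK.nonempty
  rwa [← hK.eq_of_subset (isCircuit_cycleSpace_of_isCircuit_coe hL) hLK]

lemma exists_isCircuit_cycleSpace_coe_eq (hC : G.IsCircuit C) :
    ∃ K, (cycleSpace G).IsCircuit K ∧ (K : Set (Sym2 V)) = C := by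
  obtain ⟨v, w, hw, rfl⟩ := hC
  have : (w.edges.toFinset : Set (Sym2 V)) = {e | e ∈ w.edges} := List.coe_toFinset _
  exact ⟨_, isCircuit_cycleSpace_iff.2 ⟨v, w, hw, this⟩, this⟩

lemma TwoConnectedE.exists_isCircuit_cycleSpace (hG : TwoConnectedE G) {x y : Sym2 V}
    (hx : x ∈ G.edgeSet) (hy : y ∈ G.edgeSet) (hxy : x ≠ y) :
    ∃ K, (cycleSpace G).IsCircuit K ∧ x ∈ K ∧ y ∈ K := by
  obtain ⟨C, hC, hxC, hyC⟩ := hG x hx y hy hxy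
  obtain ⟨K, hK, rfl⟩ := exists_isCircuit_cycleSpace_coe_eq hC
  exact ⟨K, hK, hxC, hyC⟩

end Graph

/-- Let `f : G → G'` be a circuit surjection with `G` 2-connected and
`G'` not a circuit.  Then for every edge `e` of `G'`, any circuit `C` of `G` containing
at least one element of `f⁻¹(e)` contains every element of `f⁻¹(e)`. -/
theorem stmt_3 {V V' : Type*} (G : SimpleGraph V) (G' : SimpleGraph V')
    (f : Sym2 V → Sym2 V')
    (hmap : Set.MapsTo f G.edgeSet G'.edgeSet)
    (hsurj : Set.SurjOn f G.edgeSet G'.edgeSet)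
    (hcirc : ∀ C, G.IsCircuit C → G'.IsCircuit (f '' C))
    (hiso : ∀ v : V', ∃ w : V', G'.Adj v w)
    (h2 : TwoConnectedE G)
    (hnotcirc : ¬ G'.IsCircuit G'.edgeSet) :
    ∀ e ∈ G'.edgeSet, ∀ C, G.IsCircuit C → (∃ x ∈ C, f x = e) →
      ∀ y ∈ G.edgeSet, f y = e → y ∈ C := by
  classical
  rintro _ - C hC ⟨x, hxC, rfl⟩ y hyG hxy
  obtain ⟨T, hT, rfl⟩ := exists_isCircuit_cycleSpace_coe_eq hC
  have hTG : (T : Set (Sym2 V)) ⊆ G.edgeSet := hT.isCycle.1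
  have hf (K) (hK : (cycleSpace G).IsCircuit K) : (cycleSpace G').IsCircuit (K.image f) :=
    isCircuit_cycleSpace_iff.2 (by simpa using hcirc K (isCircuit_cycleSpace_iff.1 hK))
  obtain ⟨z, hzG, hzT⟩ : ∃ z ∈ G.edgeSet, f z ∉ T.image f := by
    by_contra! h
    have hTG' : f '' T = G'.edgeSet :=
      (hmap.mono_left hTG).image_subset.antisymm
        (hsurj.trans (Set.image_subset_iff.2 fun a ha ↦ by simpa using h a ha))
    exact hnotcirc (hTG' ▸ hcirc T hC)
  by_contra hyT
  obtain ⟨K, hK, hxK, hyK⟩ :=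
    h2.exists_isCircuit_cycleSpace (hTG hxC) hyG (ne_of_mem_of_not_mem hxC hyT)
  obtain ⟨L, hL, hxL, hzL⟩ :=
    h2.exists_isCircuit_cycleSpace (hTG hxC) hzG (ne_of_apply_ne f
      (ne_of_mem_of_not_mem (Finset.mem_image_of_mem f hxC) hzT))
  exact hyT (hT.mem_of_apply_eq hf hxC hK hxK hyK hL hxL hzL hxy hzT)
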